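/- Correctness of adaptive discrimination trees: let M be a Mealy machine and let T be a verified adaptive discrimination tree over I, O whose leaves are labelled with representative words rep_f ∈ I*. Then any two distinct leaves f₁ ≠ f₂ of T represent distinct equivalence classes of M: ¬(rep_{f₁} ≡_{P_M} rep_{f₂}). -/

import Mathlib

/-- A (complete, deterministic) Mealy machine with state set `S`, input alphabet `I`,
output alphabet `O`, an initial state, a transition function and an output function. -/
structure Mealy (S I O : Type*) where
  init : S
  trans : S → I → S
  out1 : S → I → O

namespace Mealy

variable {S I O : Type*}

/-- The transition function extended to input words:
`δ(s, ε) = s`, `δ(s, a·w) = δ(δ(s, a), w)`. -/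
def transW (M : Mealy S I O) : S → List I → S
  | s, [] => s
  | s, a :: w => M.transW (M.trans s a) w

/-- The output function extended to input words:
`λ(s, ε) = ε`, `λ(s, a·w) = λ(s, a) · λ(δ(s, a), w)`. -/
def outW (M : Mealy S I O) : S → List I → List O
  | _, [] => []
  | s, a :: w => M.out1 s a :: M.outW (M.trans s a) w

/-- The functional `P_M` of a Mealy machine: the last output symbol emitted when
reading `w` from the initial state (`none` exactly on the empty word, which is
outside the domain `I⁺` of the functional). -/
def func (M : Mealy S I O) (w : List I) : Option O :=
  (M.outW M.init w).getLast?

/-- `u ≡_{P_M} v`: `P_M(u·w) = P_M(v·w)` for every word `w` such that `u·w` is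
nonempty. -/
def funcEqv (M : Mealy S I O) (u v : List I) : Prop :=
  ∀ w : List I, u ++ w ≠ [] → M.func (u ++ w) = M.func (v ++ w)

end Mealy

/-- An adaptive discrimination tree (ADT) over alphabets `I`, `O`: a final node
carrying a representative word; a symbol node carrying an input symbol together
with, for each output in a (nonempty) subset of `O`, a child ADT (edges labelled by
these outputs); or a reset node with exactly one child. -/
inductive ADT (I O : Type*)
  | final (rep : List I) : ADT I O
  | symbol (i : I) (children : O → Option (ADT I O)) : ADT I O
  | reset (child : ADT I O) : ADT I O

/-- `LeafAt t addr cur ts rep`: following the address `addr` in the tree `t`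
(`some o` = take the `o`-labelled edge of a symbol node, `none` = descend through a
reset node) one reaches a final node (leaf) with representative word `rep`.  `cur`
is the currently open maximal reset-free segment (input word, output word)
accumulated above `t`, and `ts` is the resulting list of traces of the leaf: the
pairs ⟨input word, output word⟩ of the maximal reset-free segments of its path, in
root-to-leaf order.  The traces of a leaf of the whole tree are obtained with
`cur = (ε, ε)`. -/
inductive LeafAt {I O : Type*} :
    ADT I O → List (Option O) → List I × List O → List (List I × List O) → List I → Prop
  | final (cur : List I × List O) (rep : List I) :
      LeafAt (.final rep) [] cur [cur] rep
  | symbol {i : I} {ch : O → Option (ADT I O)} {o : O} {c : ADT I O}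
      {addr : List (Option O)} {cur : List I × List O}
      {ts : List (List I × List O)} {rep : List I}
      (hc : ch o = some c)
      (h : LeafAt c addr (cur.1 ++ [i], cur.2 ++ [o]) ts rep) :
      LeafAt (.symbol i ch) (some o :: addr) cur ts rep
  | reset {c : ADT I O} {addr : List (Option O)} {cur : List I × List O}
      {ts : List (List I × List O)} {rep : List I}
      (h : LeafAt c addr ([], []) ts rep) :
      LeafAt (.reset c) (none :: addr) cur (cur :: ts) rep

/-- A verified ADT with respect to `M`: for every leaf `f` and every trace
`⟨i, o⟩ ∈ traces(f)`, we have `λ(δ(s₀, rep_f), i) = o`. -/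
def ADT.Verified {S I O : Type*} (M : Mealy S I O) (t : ADT I O) : Prop :=
  ∀ (addr : List (Option O)) (ts : List (List I × List O)) (rep : List I),
    LeafAt t addr ([], []) ts rep →
      ∀ p ∈ ts, M.outW (M.transW M.init rep) p.1 = p.2

/-!
Fix a state `s`. Its outputs determine which edge to follow at each symbol node of a discrimination
tree, so the traces of at most one leaf agree with the behaviour of `s`. Since equivalent words lead
to states with the same behaviour, the traces of two distinct leaves cannot be produced by
equivalent words.
-/

namespace Mealy

variable {S I O : Type*} (M : Mealy S I O)

theorem transW_append (s : S) (u w : List I) :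
    M.transW s (u ++ w) = M.transW (M.transW s u) w := by
  induction u generalizing s with
  | nil => rfl
  | cons a _ ih => exact ih (M.trans s a)

theorem outW_append (s : S) (u w : List I) :
    M.outW s (u ++ w) = M.outW s u ++ M.outW (M.transW s u) w := by
  induction u generalizing s with
  | nil => rfl
  | cons a _ ih => exact congrArg (M.out1 s a :: ·) (ih (M.trans s a))

theorem outW_append_singleton (s : S) (w : List I) (a : I) :
    M.outW s (w ++ [a]) = M.outW s w ++ [M.out1 (M.transW s w) a] :=
  M.outW_append s w [a]

theorem func_append_singleton (w : List I) (a : I) :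
    M.func (w ++ [a]) = some (M.out1 (M.transW M.init w) a) := by
  rw [func, outW_append_singleton, List.getLast?_concat]

variable {M}

theorem outW_append_singleton_eq_iff {s : S} {w : List I} {a : I} {v : List O} {o : O} :
    M.outW s (w ++ [a]) = v ++ [o] ↔ M.outW s w = v ∧ M.out1 (M.transW s w) a = o := by
  rw [outW_append_singleton, List.append_singleton_inj]

theorem funcEqv.out1_eq {u v : List I} (h : M.funcEqv u v) (w : List I) (a : I) :
    M.out1 (M.transW (M.transW M.init u) w) a = M.out1 (M.transW (M.transW M.init v) w) a := by
  have hfunc : M.func (u ++ w ++ [a]) = M.func (v ++ w ++ [a]) := by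
    simpa only [List.append_assoc] using h (w ++ [a]) (by simp)
  simpa only [func_append_singleton, transW_append, Option.some.injEq] using hfunc

theorem funcEqv.outW_eq {u v : List I} (h : M.funcEqv u v) (w : List I) :
    M.outW (M.transW M.init u) w = M.outW (M.transW M.init v) w := by
  induction w using List.reverseRecOn with
  | nil => rfl
  | append_singleton w a ih => rw [outW_append_singleton, outW_append_singleton, ih, h.out1_eq]

/-- The state `s` produces the traces `ts`: on each input word of `ts`, read from `s` afresh,
it emits the paired output word. For a leaf with representative word `rep`, being verified says that
the state reached by `rep` produces the traces of the leaf. -/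
def Produces (M : Mealy S I O) (s : S) (ts : List (List I × List O)) : Prop :=
  ∀ p ∈ ts, M.outW s p.1 = p.2

theorem funcEqv.produces_iff {u v : List I} (h : M.funcEqv u v) (ts : List (List I × List O)) :
    M.Produces (M.transW M.init u) ts ↔ M.Produces (M.transW M.init v) ts := by
  simp only [Produces, h.outW_eq]

end Mealy

namespace LeafAt

variable {S I O : Type*} {M : Mealy S I O} {s : S} {t : ADT I O}

-- The open segment `cur` is a prefix of the first trace in `ts`.
theorem outW_eq_of_produces {addr : List (Option O)} {cur : List I × List O}
    {ts : List (List I × List O)} {rep : List I} (h : LeafAt t addr cur ts rep)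
    (hts : M.Produces s ts) : M.outW s cur.1 = cur.2 := by
  induction h with
  | final cur => exact hts cur List.mem_cons_self
  | symbol _ _ ih => exact (Mealy.outW_append_singleton_eq_iff.mp (ih hts)).1
  | reset => exact hts _ List.mem_cons_self

theorem out1_eq_of_produces {addr : List (Option O)} {u : List I} {v : List O} {i : I} {o : O}
    {ts : List (List I × List O)} {rep : List I} (h : LeafAt t addr (u ++ [i], v ++ [o]) ts rep)
    (hts : M.Produces s ts) : M.out1 (M.transW s u) i = o :=
  (Mealy.outW_append_singleton_eq_iff.mp (h.outW_eq_of_produces hts)).2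

theorem addr_eq_of_produces {addr₁ addr₂ : List (Option O)} {cur : List I × List O}
    {ts₁ ts₂ : List (List I × List O)} {rep₁ rep₂ : List I}
    (h₁ : LeafAt t addr₁ cur ts₁ rep₁) (h₂ : LeafAt t addr₂ cur ts₂ rep₂)
    (hts₁ : M.Produces s ts₁) (hts₂ : M.Produces s ts₂) : addr₁ = addr₂ := by
  induction h₁ generalizing addr₂ ts₂ rep₂ with
  | final => cases h₂; rfl
  | symbol hc₁ hleaf₁ ih =>
    cases h₂ with
    | symbol hc₂ hleaf₂ =>
      obtain rfl := (hleaf₁.out1_eq_of_produces hts₁).symm.trans (hleaf₂.out1_eq_of_produces hts₂)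
      obtain rfl := Option.some.inj (hc₁.symm.trans hc₂)
      rw [ih hleaf₂ hts₁ hts₂]
  | reset _ ih =>
    cases h₂ with
    | reset hleaf₂ =>
      rw [ih hleaf₂ (List.forall_mem_cons.mp hts₁).2 (List.forall_mem_cons.mp hts₂).2]

end LeafAt

theorem adt_correctness_general {S I O : Type*} {M : Mealy S I O} {t : ADT I O}
    {addr₁ addr₂ : List (Option O)} {ts₁ ts₂ : List (List I × List O)} {rep₁ rep₂ u₁ u₂ : List I}
    (h₁ : LeafAt t addr₁ ([], []) ts₁ rep₁) (h₂ : LeafAt t addr₂ ([], []) ts₂ rep₂)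
    (hne : addr₁ ≠ addr₂) (hu₁ : M.Produces (M.transW M.init u₁) ts₁)
    (hu₂ : M.Produces (M.transW M.init u₂) ts₂) :
    ¬ M.funcEqv u₁ u₂ := fun heqv =>
  hne (h₁.addr_eq_of_produces h₂ hu₁ ((heqv.produces_iff ts₂).mpr hu₂))

/-- Correctness of adaptive discrimination trees: in a verified ADT, any two
distinct leaves represent distinct equivalence classes of `M`, i.e. their
representative words are inequivalent under `≡_{P_M}`. -/
theorem adt_correctness {S I O : Type*} [Fintype I] [Fintype O]
    (M : Mealy S I O) (t : ADT I O) (hver : ADT.Verified M t)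
    (addr₁ addr₂ : List (Option O)) (ts₁ ts₂ : List (List I × List O))
    (rep₁ rep₂ : List I)
    (h₁ : LeafAt t addr₁ ([], []) ts₁ rep₁)
    (h₂ : LeafAt t addr₂ ([], []) ts₂ rep₂)
    (hne : addr₁ ≠ addr₂) :
    ¬ M.funcEqv rep₁ rep₂ :=
  adt_correctness_general h₁ h₂ hne (hver _ _ _ h₁) (hver _ _ _ h₂)
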